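/- For every nonnegative integer n, ped(225n + 223) ≡ 0 (mod 24). -/

import Mathlib

/-- `ped n` is the number of partitions of `n` in which the even parts are
distinct (and the odd parts are unrestricted). -/
def ped (n : ℕ) : ℕ :=
  Fintype.card {p : n.Partition // ∀ x ∈ p.parts, Even x → p.parts.count x ≤ 1}

open PowerSeries Finset

section QBinomial

variable {R : Type*} [CommRing R]

/-- The Gaussian binomial coefficient `[n choose k]_q`, defined by Pascal's rule. -/
def qBinom (q : R) : ℕ → ℕ → R
  | _, 0 => 1
  | 0, _ + 1 => 0
  | n + 1, k + 1 => qBinom q n k + q ^ (k + 1) * qBinom q n (k + 1)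

/-- The finite `q`-Pochhammer symbol `(q; q)_n`. -/
def qFactorial (q : R) (n : ℕ) : R := ∏ i ∈ range n, (1 - q ^ (i + 1))

@[simp] lemma qBinom_zero_right (q : R) (n : ℕ) : qBinom q n 0 = 1 := by
  cases n <;> simp [qBinom]

lemma qBinom_succ_succ (q : R) (n k : ℕ) :
    qBinom q (n + 1) (k + 1) = qBinom q n k + q ^ (k + 1) * qBinom q n (k + 1) := by
  simp [qBinom]

lemma qBinom_eq_zero_of_lt (q : R) {n k : ℕ} (h : n < k) : qBinom q n k = 0 := by
  induction n generalizing k with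
  | zero => obtain ⟨k, rfl⟩ := Nat.exists_eq_add_of_lt h; simp [qBinom]
  | succ n ih =>
    obtain ⟨k, rfl⟩ : ∃ l, k = l + 1 := ⟨k - 1, by omega⟩
    rw [qBinom_succ_succ, ih (by omega), ih (by omega)]; simp

lemma qBinom_self (q : R) (n : ℕ) : qBinom q n n = 1 := by
  induction n with
  | zero => simp
  | succ n ih => rw [qBinom_succ_succ, ih, qBinom_eq_zero_of_lt q (Nat.lt_succ_self n)]; simp

lemma qFactorial_succ (q : R) (n : ℕ) :
    qFactorial q (n + 1) = qFactorial q n * (1 - q ^ (n + 1)) := by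
  simp [qFactorial, prod_range_succ]

lemma qBinom_mul_qFactorial_mul_qFactorial (q : R) (a b : ℕ) :
    qBinom q (a + b) a * (qFactorial q a * qFactorial q b) = qFactorial q (a + b) := by
  obtain ⟨m, hm⟩ : ∃ m, a + b = m := ⟨_, rfl⟩
  induction m generalizing a b with
  | zero =>
    obtain ⟨rfl, rfl⟩ : a = 0 ∧ b = 0 := by omega
    simp [qFactorial]
  | succ m ih =>
    rcases a with _ | a
    · simp [qFactorial]
    rcases b with _ | b
    · simp [qFactorial, qBinom_self]
    have h1 := ih a (b + 1) (by omega)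
    have h2 := ih (a + 1) b (by omega)
    have e : a + 1 + (b + 1) = (a + b + 1) + 1 := by ring
    rw [show a + (b + 1) = a + b + 1 by ring] at h1
    rw [show a + 1 + b = a + b + 1 by ring] at h2
    rw [e, qBinom_succ_succ, qFactorial_succ q (a + b + 1)]
    rw [qFactorial_succ q a] at h2 ⊢
    rw [qFactorial_succ q b] at h1 ⊢
    linear_combination (1 - q ^ (a + 1)) * h1 + q ^ (a + 1) * (1 - q ^ (b + 1)) * h2

/-- **Rothe's identity**, the homogeneous `q`-binomial theorem. -/
lemma prod_add_mul_pow_eq_sum_qBinom (q x y : R) (m : ℕ) :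
    ∏ i ∈ range m, (y + x * q ^ i) =
      ∑ k ∈ range (m + 1), q ^ k.choose 2 * qBinom q m k * x ^ k * y ^ (m - k) := by
  induction m generalizing x with
  | zero => simp
  | succ m ih =>
    rw [prod_range_succ']
    have h : ∏ i ∈ range m, (y + x * q ^ (i + 1)) = ∏ i ∈ range m, (y + (x * q) * q ^ i) :=
      prod_congr rfl fun i _ => by ring
    rw [h, ih, sum_range_succ' _ (m + 1)]
    simp only [qBinom_succ_succ, qBinom_zero_right]
    have hA : ∑ k ∈ range (m + 1), q ^ k.choose 2 * qBinom q m k * (x * q) ^ k * y ^ (m - k) * y =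
        ∑ k ∈ range (m + 1), q ^ (k + 1).choose 2 * (q ^ (k + 1) * qBinom q m (k + 1)) *
          x ^ (k + 1) * y ^ (m + 1 - (k + 1)) + y ^ (m + 1) := by
      rw [sum_range_succ', sum_range_succ (n := m), qBinom_eq_zero_of_lt q (Nat.lt_succ_self m)]
      simp only [mul_zero, zero_mul, add_zero]
      congr 1
      · refine sum_congr rfl fun k hk => ?_
        have : m + 1 - (k + 1) = m - (k + 1) + 1 := by have := mem_range.mp hk; omega
        rw [this]; ring
      · simp [pow_succ]
    have hB : ∑ k ∈ range (m + 1), q ^ k.choose 2 * qBinom q m k * (x * q) ^ k * y ^ (m - k) * x =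
        ∑ k ∈ range (m + 1), q ^ (k + 1).choose 2 * qBinom q m k *
          x ^ (k + 1) * y ^ (m + 1 - (k + 1)) := by
      refine sum_congr rfl fun k _ => ?_
      rw [Nat.choose_succ_succ' k 1, Nat.choose_one_right, Nat.add_sub_add_right]
      ring
    rw [pow_zero, mul_one, mul_add, sum_mul, sum_mul, hA, hB]
    simp only [mul_add, add_mul, sum_add_distrib]
    simp
    ring

end QBinomial

lemma prod_range_two_mul {M : Type*} [CommMonoid M] (f : ℕ → M) (n : ℕ) :
    ∏ i ∈ range (2 * n), f i = ∏ i ∈ range n, f (2 * i) * f (2 * i + 1) := by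
  induction n with
  | zero => simp
  | succ n ih => rw [mul_add_one, prod_range_succ, prod_range_succ, ih, prod_range_succ]; ac_rfl

/-- A finite form of the Jacobi triple product. -/
lemma finite_jacobi (u : ℤˣ) (a b : ℕ) (e : ℤ → ℕ)
    (he : ∀ j, 2 * (e j : ℤ) = a * (j * (j - 1)) + b * (j * (j + 1))) (n : ℕ) :
    ∏ i ∈ range n, ((1 + C (u : ℤ) * X ^ (a + (a + b) * i)) *
        (1 + C (u : ℤ) * X ^ (b + (a + b) * i)) : ℤ⟦X⟧) =
      ∑ j ∈ Icc (-n : ℤ) n, C ((u ^ j : ℤˣ) : ℤ) * X ^ e j *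
        qBinom (X ^ (a + b)) (2 * n) (n + j).toNat := by
  have hu : (u : ℤ) * u = 1 := by simp [← Units.val_mul]
  set Q : ℤ⟦X⟧ := X ^ (a + b) with hQ
  set c : ℤ⟦X⟧ := C (u : ℤ) with hc
  have hcc : c * c = 1 := by rw [hc, ← map_mul, hu, map_one]
  have key := prod_add_mul_pow_eq_sum_qBinom Q (c * X ^ b) (Q ^ n) (2 * n)
  have hL : ∏ i ∈ range (2 * n), (Q ^ n + c * X ^ b * Q ^ i) =
      Q ^ (n.choose 2 + n * n) * X ^ (b * n) * c ^ n *
      ∏ i ∈ range n, ((1 + c * X ^ (a + (a + b) * i)) * (1 + c * X ^ (b + (a + b) * i))) := by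
    rw [two_mul, prod_range_add, prod_mul_distrib]
    have h1 : ∏ i ∈ range n, (Q ^ n + c * X ^ b * Q ^ i) =
        Q ^ n.choose 2 * X ^ (b * n) * c ^ n * ∏ i ∈ range n, (1 + c * X ^ (a + (a + b) * i)) := by
      rw [← prod_range_reflect (fun i => 1 + c * X ^ (a + (a + b) * i))]
      have : Q ^ n.choose 2 * X ^ (b * n) * c ^ n = ∏ i ∈ range n, (Q ^ i * X ^ b * c) := by
        have h := prod_pow_eq_pow_sum (range n) (fun i => i) Q
        simp only [prod_mul_distrib, prod_const, card_range, h, Nat.choose_two_right,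
          sum_range_id, ← pow_mul]
      rw [this, ← prod_mul_distrib]
      refine prod_congr rfl fun i hi => ?_
      have hi := mem_range.mp hi
      have : Q ^ n = Q ^ i * X ^ b * X ^ (a + (a + b) * (n - 1 - i)) := by
        rw [hQ, ← pow_mul, ← pow_mul, ← pow_add, ← pow_add]
        congr 1
        obtain ⟨k, rfl⟩ : ∃ k, n = i + 1 + k := ⟨n - i - 1, by omega⟩
        rw [show i + 1 + k - 1 - i = k by omega]; ring
      rw [this]
      linear_combination (-Q ^ i * X ^ b * X ^ (a + (a + b) * (n - 1 - i))) * hcc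
    have h2 : ∏ i ∈ range n, (Q ^ n + c * X ^ b * Q ^ (n + i)) =
        Q ^ (n * n) * ∏ i ∈ range n, (1 + c * X ^ (b + (a + b) * i)) := by
      have : Q ^ (n * n) = ∏ i ∈ range n, Q ^ n := by simp [pow_mul]
      rw [this, ← prod_mul_distrib]
      refine prod_congr rfl fun i hi => ?_
      rw [hQ]; ring
    rw [h1, h2]; ring
  have hR : ∑ k ∈ range (2 * n + 1), Q ^ k.choose 2 * qBinom Q (2 * n) k * (c * X ^ b) ^ k *
        (Q ^ n) ^ (2 * n - k) = Q ^ (n.choose 2 + n * n) * X ^ (b * n) * c ^ n *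
      ∑ j ∈ Icc (-n : ℤ) n, C ((u ^ j : ℤˣ) : ℤ) * X ^ e j * qBinom Q (2 * n) (n + j).toNat := by
    rw [mul_sum]
    refine sum_bij' (fun k _ => (k : ℤ) - n) (fun j _ => (n + j).toNat) ?_ ?_ ?_ ?_ ?_
    · intro k hk; simp at hk ⊢; omega
    · intro j hj; simp at hj ⊢; omega
    · intro k hk; simp
    · intro j hj; simp at hj ⊢; omega
    · intro k hk
      have hk : k ≤ 2 * n := by simp at hk; omega
      rw [add_sub_cancel, Int.toNat_natCast]
      have hu' : c ^ n * C ((u ^ ((k : ℤ) - n) : ℤˣ) : ℤ) = c ^ k := by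
        rw [hc, ← map_pow, ← map_pow, ← map_mul, ← Units.val_pow_eq_pow_val,
          ← Units.val_pow_eq_pow_val, ← Units.val_mul, ← zpow_natCast, ← zpow_natCast, ← zpow_add]
        simp
      have hX : Q ^ k.choose 2 * (X ^ b) ^ k * (Q ^ n) ^ (2 * n - k) =
          Q ^ (n.choose 2 + n * n) * X ^ (b * n) * X ^ e (k - n) := by
        rw [hQ]
        simp only [← pow_mul, ← pow_add]
        congr 1
        have h2 (m : ℕ) : (2 * m.choose 2 : ℤ) = m * (m - 1) := by
          induction m with
          | zero => simp
          | succ m ih => rw [Nat.choose_succ_succ' m 1]; push_cast [Nat.choose_one_right]; linarith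
        zify
        apply mul_left_cancel₀ (two_ne_zero (α := ℤ))
        push_cast [Nat.cast_sub hk]
        linear_combination (a + b : ℤ) * h2 k - (a + b : ℤ) * h2 n - he (k - n)
      rw [mul_pow]
      linear_combination qBinom Q (2 * n) k * (c ^ k * hX -
        Q ^ (n.choose 2 + n * n) * X ^ (b * n) * X ^ e (k - n) * hu')
  rw [hL, hR] at key
  refine mul_left_cancel₀ ?_ key
  have hc0 : c ≠ 0 := left_ne_zero_of_mul (hcc.symm ▸ one_ne_zero)
  simp [hQ, X_ne_zero, hc0]

/-- The partial theta series `∑ u ^ j * X ^ e j` over all integers `j`, for an exponent function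
with `|j| ≤ e j`. -/
noncomputable def thetaSeries (u : ℤˣ) (e : ℤ → ℕ) : ℤ⟦X⟧ :=
  PowerSeries.mk fun m => ∑ j ∈ Icc (-m : ℤ) m, if e j = m then ((u ^ j : ℤˣ) : ℤ) else 0

section Theta

variable {u : ℤˣ} {e : ℤ → ℕ}

lemma coeff_thetaSeries (he : ∀ j, j.natAbs ≤ e j) {m N : ℕ} (h : m ≤ N) :
    coeff m (thetaSeries u e) =
      ∑ j ∈ Icc (-N : ℤ) N, if e j = m then ((u ^ j : ℤˣ) : ℤ) else 0 := by
  rw [thetaSeries, coeff_mk]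
  refine sum_subset (Icc_subset_Icc (by omega) (by omega)) fun j _ hj => if_neg fun hm => hj ?_
  have := he j
  simp only [mem_Icc]
  omega

lemma exists_of_coeff_thetaSeries_ne_zero {m : ℕ} (h : coeff m (thetaSeries u e) ≠ 0) :
    ∃ j, e j = m := by
  rw [thetaSeries, coeff_mk] at h
  obtain ⟨j, _, hj⟩ := exists_ne_zero_of_sum_ne_zero h
  exact ⟨j, by by_contra hm; simp [hm] at hj⟩

lemma X_pow_dvd_sum_sub_thetaSeries (he : ∀ j, j.natAbs ≤ e j) (n : ℕ) :
    X ^ (n + 1) ∣ ∑ j ∈ Icc (-n : ℤ) n, C ((u ^ j : ℤˣ) : ℤ) * X ^ e j - thetaSeries u e := by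
  rw [X_pow_dvd_iff]
  intro m hm
  rw [map_sub, coeff_thetaSeries he (Nat.lt_succ_iff.mp hm), map_sum, sub_eq_zero]
  refine sum_congr rfl fun j _ => ?_
  simp only [coeff_C_mul, coeff_X_pow, mul_ite, mul_one, mul_zero, eq_comm]

end Theta

lemma X_pow_dvd_prod_sub_prod {f : ℕ → ℤ⟦X⟧} {n a b : ℕ} (hf : ∀ i, n ≤ i → X ^ n ∣ f i - 1)
    (ha : n ≤ a) (hab : a ≤ b) : X ^ n ∣ ∏ i ∈ range b, f i - ∏ i ∈ range a, f i := by
  induction b, hab using Nat.le_induction with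
  | base => simp
  | succ b hb ih =>
    rw [prod_range_succ]
    have := (hf b (ha.trans hb)).mul_left (∏ i ∈ range b, f i)
    convert this.add ih using 1
    ring

lemma X_pow_dvd_qFactorial_sub_qFactorial {d n a b : ℕ} (hd : d ≠ 0) (ha : n ≤ a) (hb : n ≤ b) :
    (X : ℤ⟦X⟧) ^ (n + 1) ∣ qFactorial (X ^ d) a - qFactorial (X ^ d) b := by
  have key (a : ℕ) (ha : n ≤ a) :
      (X : ℤ⟦X⟧) ^ (n + 1) ∣ qFactorial (X ^ d) a - qFactorial (X ^ d) n := by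
    induction a, ha using Nat.le_induction with
    | base => simp
    | succ a ha ih =>
      rw [qFactorial_succ]
      have h : (X : ℤ⟦X⟧) ^ (n + 1) ∣ (X ^ d) ^ (a + 1) := by
        rw [← pow_mul]
        exact pow_dvd_pow _ (by nlinarith [Nat.pos_of_ne_zero hd])
      convert ih.sub (h.mul_left (qFactorial (X ^ d) a)) using 1
      ring
  convert (key a ha).sub (key b hb) using 1
  ring

lemma isUnit_qFactorial {d : ℕ} (hd : d ≠ 0) (n : ℕ) : IsUnit (qFactorial (X ^ d : ℤ⟦X⟧) n) := by
  rw [isUnit_iff_constantCoeff, qFactorial, map_prod]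
  simp [hd]

lemma X_pow_dvd_qBinom_mul_qFactorial_sub_one {d : ℕ} (hd : d ≠ 0) {n k l m : ℕ} (hn : n ≤ m)
    (hk : n ≤ k) (hl : n ≤ l) :
    (X : ℤ⟦X⟧) ^ (n + 1) ∣ qBinom (X ^ d) (k + l) k * qFactorial (X ^ d) m - 1 := by
  have h1 := qBinom_mul_qFactorial_mul_qFactorial (X ^ d : ℤ⟦X⟧) k l
  have hkm := X_pow_dvd_qFactorial_sub_qFactorial hd hk hn
  have hlm := X_pow_dvd_qFactorial_sub_qFactorial hd hl hn
  have hklm := X_pow_dvd_qFactorial_sub_qFactorial hd (hk.trans (Nat.le_add_right k l)) hn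
  rw [← (isUnit_qFactorial hd m).dvd_mul_left]
  set q := (X ^ d : ℤ⟦X⟧)
  have := (hklm.sub (hkm.mul_left (qBinom q (k + l) k * qFactorial q l))).sub
    (hlm.mul_left (qBinom q (k + l) k * qFactorial q m))
  convert this using 1
  rw [← h1]
  ring

/-- The Jacobi triple product, up to `X ^ n`. -/
lemma X_pow_dvd_jacobi (u : ℤˣ) {a b : ℕ} (hb : b ≠ 0) {e : ℤ → ℕ}
    (he : ∀ j, 2 * (e j : ℤ) = a * (j * (j - 1)) + b * (j * (j + 1)))
    (he' : ∀ j, j.natAbs ≤ e j) (n : ℕ) :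
    X ^ n ∣ (∏ i ∈ range n, ((1 + C (u : ℤ) * X ^ (a + (a + b) * i)) *
        (1 + C (u : ℤ) * X ^ (b + (a + b) * i)) : ℤ⟦X⟧)) * qFactorial (X ^ (a + b)) n -
      thetaSeries u e := by
  rw [finite_jacobi u a b e he]
  have h1 := dvd_trans (pow_dvd_pow X n.le_succ) (X_pow_dvd_sum_sub_thetaSeries (u := u) he' n)
  rw [← sub_add_sub_cancel]
  refine dvd_add ?_ h1
  rw [sum_mul, ← sum_sub_distrib]
  refine dvd_sum fun j hj => ?_
  have hj := mem_Icc.mp hj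
  have h2 := X_pow_dvd_qBinom_mul_qFactorial_sub_one (d := a + b) (by omega) (n := n - j.natAbs)
    (k := (n + j).toNat) (l := (n - j).toNat) (m := n) (by omega) (by omega) (by omega)
  rw [show (n + j).toNat + (n - j).toNat = 2 * n by omega] at h2
  have h3 : (X : ℤ⟦X⟧) ^ n ∣ X ^ e j * X ^ (n - j.natAbs + 1) := by
    rw [← pow_add]
    exact pow_dvd_pow _ (by have := he' j; omega)
  have h4 := (h3.trans (mul_dvd_mul_left _ h2)).mul_left (C ((u ^ j : ℤˣ) : ℤ))
  convert h4 using 1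
  ring

/-- The generating function of `ped`. -/
noncomputable def pedSeries : ℤ⟦X⟧ := PowerSeries.mk fun n => (ped n : ℤ)

open scoped PowerSeries.WithPiTopology in
/-- The Euler product of `pedSeries`, with the odd parts moved to the left. -/
lemma exists_X_pow_dvd_pedSeries_mul_prod_sub_prod (n : ℕ) : ∃ N, ∀ M ≥ N,
    X ^ n ∣ pedSeries * ∏ i ∈ range M, (1 - X ^ (2 * i + 1)) -
      ∏ i ∈ range M, (1 + X ^ (2 * i + 2)) := by
  let _ : TopologicalSpace ℤ := ⊥
  have _ : DiscreteTopology ℤ := ⟨rfl⟩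
  set w : ℕ → ℕ → ℤ := fun i c => if Even i → c ≤ 1 then 1 else 0 with hw
  set h : ℕ → ℤ⟦X⟧ := fun i => 1 + ∑' j, w (i + 1) (j + 1) • X ^ ((i + 1) * (j + 1)) with hh
  have hgen : pedSeries = Nat.Partition.genFun w := by
    ext m
    rw [pedSeries, coeff_mk, Nat.Partition.coeff_genFun, ped, Fintype.card_subtype]
    simp [hw, Finsupp.prod, prod_boole]
  have hprod : HasProd h pedSeries := hgen ▸ Nat.Partition.hasProd_genFun w
  have hodd (i : ℕ) : h (2 * i) * (1 - X ^ (2 * i + 1)) = 1 := by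
    have : h (2 * i) = ∑' j, (X ^ (2 * i + 1)) ^ j := by
      rw [tsum_eq_zero_add' ?_]
      · simp [hh, hw, pow_mul]
      simp_rw [pow_add]
      apply Summable.mul_right
      exact WithPiTopology.summable_pow_of_constantCoeff_eq_zero (by simp)
    rw [this, WithPiTopology.tsum_pow_mul_one_sub_of_constantCoeff_eq_zero (by simp)]
  have heven (i : ℕ) : h (2 * i + 1) = 1 + X ^ (2 * i + 2) := by
    simp only [hh]
    rw [tsum_eq_single 0]
    · simp [hw]
    · intro j hj
      have : Even (2 * i + 1 + 1) := ⟨i + 1, by ring⟩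
      simp [hw, this, hj]
  have hM (M : ℕ) : (∏ i ∈ range (2 * M), h i) * ∏ i ∈ range M, (1 - X ^ (2 * i + 1)) =
      ∏ i ∈ range M, (1 + X ^ (2 * i + 2)) := by
    rw [prod_range_two_mul, ← prod_mul_distrib]
    refine prod_congr rfl fun i _ => ?_
    rw [heven]
    linear_combination (1 + X ^ (2 * i + 2)) * hodd i
  rw [HasProd, SummationFilter.unconditional_filter,
    WithPiTopology.tendsto_iff_coeff_tendsto] at hprod
  have hev : ∀ᶠ s in Filter.atTop, ∀ d ∈ range n, coeff d (∏ i ∈ s, h i) = coeff d pedSeries := by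
    rw [Filter.eventually_all_finset]
    intro d _
    simpa using hprod d
  obtain ⟨s₀, hs₀⟩ := Filter.eventually_atTop.mp hev
  obtain ⟨N, hN⟩ := s₀.exists_nat_subset_range
  refine ⟨N, fun M hMN => ?_⟩
  rw [← hM, ← sub_mul]
  refine Dvd.dvd.mul_right ?_ _
  rw [X_pow_dvd_iff]
  intro d hd
  rw [map_sub, hs₀ (range (2 * M)) (hN.trans (range_subset_range.mpr (by omega))) d
    (mem_range.mpr hd), sub_self]

/-- The theta series `∑ (-1) ^ j X ^ (j ^ 2)`. -/
noncomputable def phi : ℤ⟦X⟧ := thetaSeries (-1) fun j => (j ^ 2).toNat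

/-- The theta series `∑ (-1) ^ j X ^ (2 * j ^ 2 + j)`. -/
noncomputable def psiNeg : ℤ⟦X⟧ := thetaSeries (-1) fun j => (2 * j ^ 2 + j).toNat

/-- The theta series `∑ X ^ (4 * j ^ 2 + 2 * j)`. -/
noncomputable def psiSq : ℤ⟦X⟧ := thetaSeries 1 fun j => (4 * j ^ 2 + 2 * j).toNat

lemma natAbs_le_phi_exponent (j : ℤ) : j.natAbs ≤ (j ^ 2).toNat := by
  zify
  rw [Int.toNat_of_nonneg (by positivity), ← sq_abs]
  nlinarith [abs_nonneg j, Int.le_self_sq |j|]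

lemma psiNeg_exponent_nonneg (j : ℤ) : 0 ≤ 2 * j ^ 2 + j := by
  nlinarith [Int.le_self_sq (-j), sq_nonneg j]

lemma psiSq_exponent_nonneg (j : ℤ) : 0 ≤ 4 * j ^ 2 + 2 * j := by
  linarith [psiNeg_exponent_nonneg j]

lemma natAbs_le_psiNeg_exponent (j : ℤ) : j.natAbs ≤ (2 * j ^ 2 + j).toNat := by
  zify
  rw [Int.toNat_of_nonneg (psiNeg_exponent_nonneg j), abs_le]
  constructor <;> nlinarith [Int.le_self_sq (-j), sq_nonneg j]

lemma natAbs_le_psiSq_exponent (j : ℤ) : j.natAbs ≤ (4 * j ^ 2 + 2 * j).toNat := by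
  have := natAbs_le_psiNeg_exponent j
  have := psiNeg_exponent_nonneg j
  omega

lemma X_pow_dvd_phi (n : ℕ) : X ^ n ∣ (∏ i ∈ range n, (1 - X ^ (2 * i + 1))) ^ 2 *
    qFactorial (X ^ 2) n - phi := by
  have h := X_pow_dvd_jacobi (-1) (a := 1) (b := 1) one_ne_zero (e := fun j => (j ^ 2).toNat)
    (fun j => by rw [Int.toNat_of_nonneg (by positivity)]; push_cast; ring)
    natAbs_le_phi_exponent n
  convert h using 3
  · rw [sq, ← prod_mul_distrib]
    refine prod_congr rfl fun i _ => ?_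
    simp
    ring
  · rfl

lemma X_pow_dvd_psiNeg (n : ℕ) : X ^ n ∣ (∏ i ∈ range (2 * n), (1 - X ^ (2 * i + 1))) *
    qFactorial (X ^ 4) n - psiNeg := by
  have h := X_pow_dvd_jacobi (-1) (a := 1) (b := 3) three_ne_zero
    (e := fun j => (2 * j ^ 2 + j).toNat)
    (fun j => by rw [Int.toNat_of_nonneg (psiNeg_exponent_nonneg j)]; push_cast; ring)
    natAbs_le_psiNeg_exponent n
  convert h using 3
  · rw [prod_range_two_mul]
    refine prod_congr rfl fun i _ => ?_
    simp
    ring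
  · rfl

lemma X_pow_dvd_psiSq (n : ℕ) : X ^ n ∣ (∏ i ∈ range (2 * n), (1 + X ^ (4 * i + 2))) *
    qFactorial (X ^ 8) n - psiSq := by
  have h := X_pow_dvd_jacobi 1 (a := 2) (b := 6) (by norm_num)
    (e := fun j => (4 * j ^ 2 + 2 * j).toNat)
    (fun j => by rw [Int.toNat_of_nonneg (psiSq_exponent_nonneg j)]; push_cast; ring)
    natAbs_le_psiSq_exponent n
  convert h using 3
  · rw [prod_range_two_mul]
    refine prod_congr rfl fun i _ => ?_
    simp
    ring
  · rfl

lemma qFactorial_sq {R : Type*} [CommRing R] (q : R) (n : ℕ) :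
    qFactorial (q ^ 2) n = qFactorial q n * ∏ i ∈ range n, (1 + q ^ (i + 1)) := by
  rw [qFactorial, qFactorial, ← prod_mul_distrib]
  refine prod_congr rfl fun i _ => ?_
  ring

lemma eq_of_forall_X_pow_dvd_sub {f g : ℤ⟦X⟧} (h : ∀ n, X ^ n ∣ f - g) : f = g := by
  ext n
  have := X_pow_dvd_iff.mp (h (n + 1)) n n.lt_succ_self
  rwa [map_sub, sub_eq_zero] at this

lemma pedSeries_mul_phi_and_psiNeg : pedSeries * phi = psiNeg ∧ pedSeries * psiNeg = psiSq := by
  suffices h : ∀ n, X ^ n ∣ pedSeries * phi - psiNeg ∧ X ^ n ∣ pedSeries * psiNeg - psiSq from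
    ⟨eq_of_forall_X_pow_dvd_sub fun n => (h n).1, eq_of_forall_X_pow_dvd_sub fun n => (h n).2⟩
  intro n
  obtain ⟨N, hN⟩ := exists_X_pow_dvd_pedSeries_mul_prod_sub_prod n
  obtain ⟨M, hnM, hNM⟩ : ∃ M, n ≤ M ∧ N ≤ M := ⟨max n N, le_max_left _ _, le_max_right _ _⟩
  have hMn := pow_dvd_pow (X : ℤ⟦X⟧) hnM
  have hphi := hMn.trans (X_pow_dvd_phi M)
  have hpsi := hMn.trans (X_pow_dvd_psiNeg M)
  have hsq := hMn.trans (X_pow_dvd_psiSq M)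
  have hg := hN M hNM
  have hg2 := hN (2 * M) (by omega)
  have hO := X_pow_dvd_prod_sub_prod (n := n) (f := fun i => 1 - X ^ (2 * i + 1)) (fun i hi => by
    rw [sub_sub_cancel_left, dvd_neg]; exact pow_dvd_pow _ (by omega)) hnM
    (Nat.le_mul_of_pos_left M two_pos)
  have hE := X_pow_dvd_prod_sub_prod (n := n) (f := fun i => 1 + X ^ (2 * i + 2)) (fun i hi => by
    rw [add_sub_cancel_left]; exact pow_dvd_pow _ (by omega)) (by omega : n ≤ 2 * M)
    (Nat.le_mul_of_pos_left _ two_pos)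
  have hE' := X_pow_dvd_prod_sub_prod (n := n) (f := fun i => 1 + X ^ (4 * i + 4)) (fun i hi => by
    rw [add_sub_cancel_left]; exact pow_dvd_pow _ (by omega)) hnM
    (Nat.le_mul_of_pos_left M two_pos)
  have h4 : qFactorial (X ^ 4 : ℤ⟦X⟧) M =
      qFactorial (X ^ 2) M * ∏ i ∈ range M, (1 + X ^ (2 * i + 2)) := by
    rw [show (X ^ 4 : ℤ⟦X⟧) = (X ^ 2) ^ 2 by ring, qFactorial_sq]
    simp only [← pow_mul, mul_add, mul_one]
  have h8 : qFactorial (X ^ 8 : ℤ⟦X⟧) M =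
      qFactorial (X ^ 4) M * ∏ i ∈ range M, (1 + X ^ (4 * i + 4)) := by
    rw [show (X ^ 8 : ℤ⟦X⟧) = (X ^ 4) ^ 2 by ring, qFactorial_sq]
    simp only [← pow_mul, mul_add, mul_one]
  have hsplit : ∏ i ∈ range (2 * (2 * M)), (1 + X ^ (2 * i + 2) : ℤ⟦X⟧) =
      (∏ i ∈ range (2 * M), (1 + X ^ (4 * i + 2))) *
        ∏ i ∈ range (2 * M), (1 + X ^ (4 * i + 4)) := by
    rw [prod_range_two_mul, prod_mul_distrib]
    congr 1 <;> exact prod_congr rfl fun i _ => by ring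
  rw [hsplit] at hE
  rw [h8] at hsq
  simp only [← Ideal.mem_span_singleton, ← Ideal.Quotient.mk_eq_mk_iff_sub_mem, map_mul,
    map_pow] at *
  set π := Ideal.Quotient.mk (Ideal.span {(X ^ n : ℤ⟦X⟧)})
  constructor
  · rw [← hphi, ← hpsi, h4, hO, map_mul]
    linear_combination π (∏ i ∈ range M, (1 - X ^ (2 * i + 1))) * π (qFactorial (X ^ 2) M) * hg
  · rw [← hpsi, ← hsq, ← hE']
    linear_combination π (qFactorial (X ^ 4) M) * (hg2 - hE)

lemma coeff_pow_char {p : ℕ} [hp : Fact p.Prime] (f : (ZMod p)⟦X⟧) (n : ℕ) :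
    coeff n (f ^ p) = if p ∣ n then coeff (n / p) f else 0 := by
  have h := MvPowerSeries.map_frobenius_expand p hp.out.ne_zero (f := f)
  rw [ZMod.frobenius_zmod, MvPowerSeries.map_id, RingHom.id_apply] at h
  rw [← coeff_expand p hp.out.ne_zero, ← h]
  rfl

lemma exists_sq_eq_of_coeff_phi_ne_zero {m : ℕ} (h : coeff m phi ≠ 0) : ∃ j : ℤ, j ^ 2 = m := by
  obtain ⟨j, hj⟩ := exists_of_coeff_thetaSeries_ne_zero h
  exact ⟨j, by rw [← hj, Int.toNat_of_nonneg (sq_nonneg j)]⟩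

lemma exists_of_coeff_psiNeg_ne_zero {m : ℕ} (h : coeff m psiNeg ≠ 0) :
    ∃ j : ℤ, 2 * j ^ 2 + j = m := by
  obtain ⟨j, hj⟩ := exists_of_coeff_thetaSeries_ne_zero h
  exact ⟨j, by rw [← hj, Int.toNat_of_nonneg (psiNeg_exponent_nonneg j)]⟩

lemma two_dvd_coeff_phi {m : ℕ} (hm : m ≠ 0) : 2 ∣ coeff m phi := by
  rw [← Nat.cast_two, ← ZMod.intCast_zmod_eq_zero_iff_dvd, phi, thetaSeries, coeff_mk]
  push_cast
  refine sum_involution (fun j _ => -j) ?_ ?_ ?_ ?_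
  · intro j _
    rw [neg_sq, zpow_neg, Int.units_inv_eq_self]
    exact CharTwo.add_self_eq_zero _
  · intro j _ hj hj'
    obtain rfl : j = 0 := by omega
    simp [hm.symm] at hj
  · intro j hj
    simp only [mem_Icc] at hj ⊢
    omega
  · simp

lemma coeff_zero_phi : coeff 0 phi = 1 := by
  simp [phi, thetaSeries]

lemma exists_phi_eq_one_add_two_mul :
    ∃ S : ℤ⟦X⟧, phi = 1 + 2 * S ∧ ∀ m, coeff m S ≠ 0 → ∃ j : ℤ, j ^ 2 = m := by
  refine ⟨PowerSeries.mk fun m => if m = 0 then 0 else coeff m phi / 2, ?_, fun m hm => ?_⟩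
  · ext m
    rw [map_add, show (2 : ℤ⟦X⟧) = C 2 by simp, coeff_C_mul, coeff_mk, coeff_one]
    split_ifs with h
    · simp [h, coeff_zero_phi]
    · rw [zero_add, Int.mul_ediv_cancel' (two_dvd_coeff_phi h)]
  · rw [coeff_mk] at hm
    refine exists_sq_eq_of_coeff_phi_ne_zero fun h => hm ?_
    simp [h]

lemma coeff_mul_eq_zero_of {R : Type*} [Semiring R] {f g : R⟦X⟧} {N : ℕ}
    (h : ∀ k l, k + l = N → coeff k f ≠ 0 → coeff l g ≠ 0 → False) : coeff N (f * g) = 0 := by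
  rw [coeff_mul]
  refine sum_eq_zero fun x hx => ?_
  by_contra hne
  exact h x.1 x.2 (mem_antidiagonal.mp hx) (left_ne_zero_of_mul hne) (right_ne_zero_of_mul hne)

lemma coeff_ne_zero_of_map {R S : Type*} [Semiring R] [Semiring S] {φ : R →+* S} {f : R⟦X⟧} {n : ℕ}
    (h : coeff n (PowerSeries.map φ f) ≠ 0) : coeff n f ≠ 0 := by
  rintro h0
  simp [h0] at h

theorem eight_dvd_ped (n : ℕ) : 8 ∣ ped (225 * n + 223) := by
  set N := 225 * n + 223 with hN
  obtain ⟨S, hS, hS'⟩ := exists_phi_eq_one_add_two_mul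
  have h25 : ∀ x y : ZMod 25, x ^ 2 + 8 * y ^ 2 ≠ 10 := by decide
  have h9 : ∀ x y : ZMod 9, x ^ 2 + 16 * y ^ 2 ≠ 3 := by decide
  have h225 : (225 : ZMod 25) = 0 ∧ (225 : ZMod 9) = 0 := ⟨rfl, rfl⟩
  have h0 : coeff N psiNeg = 0 := by
    by_contra h
    obtain ⟨i, hi⟩ := exists_of_coeff_psiNeg_ne_zero h
    have := congrArg (Int.cast : ℤ → ZMod 25) hi
    rw [hN] at this
    push_cast at this
    refine h25 (4 * i + 1) 0 ?_
    have h1785 : (1785 : ZMod 25) = 10 := rfl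
    linear_combination 8 * this + 8 * (n : ZMod 25) * h225.1 + h1785
  have h1 : coeff N (psiNeg * S) = 0 := by
    refine coeff_mul_eq_zero_of fun k l hkl hk hl => ?_
    obtain ⟨i, hi⟩ := exists_of_coeff_psiNeg_ne_zero hk
    obtain ⟨j, hj⟩ := hS' l hl
    have hi := congrArg (Int.cast : ℤ → ZMod 25) hi
    have hj := congrArg (Int.cast : ℤ → ZMod 25) hj
    have hkl := congrArg (Nat.cast : ℕ → ZMod 25) hkl
    rw [hN] at hkl
    push_cast at hi hj hkl
    refine h25 (4 * i + 1) j ?_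
    have h1785 : (1785 : ZMod 25) = 10 := rfl
    linear_combination 8 * hi + 8 * hj + 8 * hkl + 8 * (n : ZMod 25) * h225.1 + h1785
  have h2 : 2 ∣ coeff N (psiNeg * S ^ 2) := by
    rw [← Nat.cast_two, ← ZMod.intCast_zmod_eq_zero_iff_dvd]
    change Int.castRingHom (ZMod 2) (coeff N (psiNeg * S ^ 2)) = 0
    rw [← coeff_map, map_mul, map_pow]
    refine coeff_mul_eq_zero_of fun k l hkl hk hl => ?_
    rw [coeff_pow_char] at hl
    split_ifs at hl with h2l
    · obtain ⟨i, hi⟩ := exists_of_coeff_psiNeg_ne_zero (coeff_ne_zero_of_map hk)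
      obtain ⟨j, hj⟩ := hS' _ (coeff_ne_zero_of_map hl)
      obtain ⟨l, rfl⟩ := h2l
      rw [Nat.mul_div_cancel_left _ two_pos] at hj
      have hi := congrArg (Int.cast : ℤ → ZMod 9) hi
      have hj := congrArg (Int.cast : ℤ → ZMod 9) hj
      have hkl := congrArg (Nat.cast : ℕ → ZMod 9) hkl
      rw [hN] at hkl
      push_cast at hi hj hkl
      refine h9 (4 * i + 1) j ?_
      have h1785 : (1785 : ZMod 9) = 3 := rfl
      linear_combination 8 * hi + 16 * hj + 8 * hkl + 8 * (n : ZMod 9) * h225.2 + h1785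
    · exact hl rfl
  obtain ⟨c, hc⟩ := h2
  have key : pedSeries = psiNeg + C (-2) * (psiNeg * S) + C 4 * (psiNeg * S ^ 2) +
      C (-8) * (pedSeries * S ^ 3) := by
    have := pedSeries_mul_phi_and_psiNeg.1
    rw [← this, hS]
    simp
    ring
  have := congrArg (coeff N) key
  simp only [map_add, coeff_C_mul, h0, h1, hc] at this
  rw [pedSeries, coeff_mk] at this
  omega

lemma coeff_thetaSeries_mul_add {u s : ℤˣ} {e : ℤ → ℕ} (he : ∀ j, j.natAbs ≤ e j) {a c m : ℕ}
    (ha : a ≠ 0) {τ : ℤ → ℤ} (hτ : Function.Injective τ) (hτe : ∀ i, e (τ i) = a * e i + c)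
    (hτu : ∀ i, u ^ τ i = s * u ^ i) (hτm : ∀ j, e j = a * m + c → ∃ i, τ i = j) :
    coeff (a * m + c) (thetaSeries u e) = s * coeff m (thetaSeries u e) := by
  simp only [thetaSeries, coeff_mk]
  rw [← sum_filter, ← sum_filter, mul_sum]
  symm
  refine sum_bij (fun i _ => τ i) (fun i hi => ?_) (fun i _ j _ h => hτ h) (fun j hj => ?_)
    (fun i _ => ?_)
  · simp only [mem_filter, mem_Icc] at hi ⊢
    have h1 := he (τ i)
    have h2 := hτe i
    rw [hi.2] at h2
    omega
  · simp only [mem_filter, mem_Icc] at hj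
    obtain ⟨i, rfl⟩ := hτm j hj.2
    refine ⟨i, ?_, rfl⟩
    have h1 := he i
    have h2 : e i = m := Nat.eq_of_mul_eq_mul_left (Nat.pos_of_ne_zero ha)
      (Nat.add_right_cancel ((hτe i).symm.trans hj.2))
    simp only [mem_filter, mem_Icc]
    omega
  · rw [hτu]
    push_cast
    rfl

lemma coeff_phi_nine_mul (m : ℕ) : coeff (9 * m) phi = coeff m phi := by
  have := coeff_thetaSeries_mul_add (u := -1) (s := 1) (a := 9) (c := 0) (m := m)
    natAbs_le_phi_exponent (by norm_num) (τ := fun i => 3 * i) (fun i j h => by simpa using h)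
    (fun i => ?_) (fun i => ?_) (fun j hj => ?_)
  · simpa [phi] using this
  · have := sq_nonneg i
    have : (3 * i) ^ 2 = 9 * i ^ 2 := by ring
    omega
  · rw [zpow_mul]
    simp
    rfl
  · have h9 : (3 : ℤ) ∣ j ^ 2 := by
      have := sq_nonneg j
      omega
    obtain ⟨i, rfl⟩ := Int.prime_three.dvd_of_dvd_pow h9
    exact ⟨i, rfl⟩

lemma coeff_psiNeg_nine_mul_add_one (m : ℕ) : coeff (9 * m + 1) psiNeg = -coeff m psiNeg := by
  have := coeff_thetaSeries_mul_add (u := -1) (s := -1) (a := 9) (c := 1) (m := m)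
    natAbs_le_psiNeg_exponent (by norm_num) (τ := fun i => -3 * i - 1)
    (fun i j h => by simpa using h) (fun i => ?_) (fun i => ?_) (fun j hj => ?_)
  · simpa [psiNeg] using this
  · have := psiNeg_exponent_nonneg i
    have : 2 * (-3 * i - 1) ^ 2 + (-3 * i - 1) = 9 * (2 * i ^ 2 + i) + 1 := by ring
    omega
  · rw [zpow_sub, zpow_mul]
    simp
    rfl
  · have h : 2 * j ^ 2 + j = 9 * m + 1 := by
      have := psiNeg_exponent_nonneg j
      omega
    have h3 : ∀ x : ZMod 3, 2 * x ^ 2 + x = 1 → x + 1 = 0 := by decide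
    have hj3 := h3 j (by
      have := congrArg (Int.cast : ℤ → ZMod 3) h
      push_cast at this
      rw [this, show (9 : ZMod 3) = 0 from rfl]
      simp)
    have hj3 : ((j + 1 : ℤ) : ZMod 3) = 0 := by exact_mod_cast hj3
    rw [ZMod.intCast_zmod_eq_zero_iff_dvd] at hj3
    obtain ⟨i, hi⟩ := hj3
    exact ⟨-i, by push_cast at hi; omega⟩

/-- All monomials of `f` have exponents congruent to `r` modulo `3`. -/
def HasResidue (r : ZMod 3) (f : (ZMod 3)⟦X⟧) : Prop :=
  ∀ n, coeff n f ≠ 0 → (n : ZMod 3) = r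

namespace HasResidue

variable {r s : ZMod 3} {f g : (ZMod 3)⟦X⟧}

lemma coeff_eq_zero (hf : HasResidue r f) {n : ℕ} (hn : (n : ZMod 3) ≠ r) : coeff n f = 0 :=
  not_not.mp fun h => hn (hf n h)

lemma add (hf : HasResidue r f) (hg : HasResidue r g) : HasResidue r (f + g) := by
  intro n hn
  by_contra h
  exact hn (by rw [map_add, hf.coeff_eq_zero h, hg.coeff_eq_zero h, add_zero])

lemma mul (hf : HasResidue r f) (hg : HasResidue s g) : HasResidue (r + s) (f * g) := by
  intro n hn
  by_contra h
  refine hn (coeff_mul_eq_zero_of fun k l hkl hk hl => h ?_)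
  rw [← hkl, Nat.cast_add, hf k hk, hg l hl]

end HasResidue

lemma hasResidue_pow_three (f : (ZMod 3)⟦X⟧) : HasResidue 0 (f ^ 3) := by
  intro n hn
  rw [coeff_pow_char] at hn
  exact (ZMod.natCast_eq_zero_iff n 3).mpr (by by_contra h; simp [h] at hn)

lemma hasResidue_X : HasResidue 1 X := by
  intro n hn
  rw [coeff_X] at hn
  split_ifs at hn with h
  · simp [h]
  · exact absurd rfl hn

lemma coeff_pow_nine (f : (ZMod 3)⟦X⟧) (n : ℕ) :
    coeff n (f ^ 9) = if 9 ∣ n then coeff (n / 9) f else 0 := by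
  rw [show f ^ 9 = (f ^ 3) ^ 3 by ring, coeff_pow_char, coeff_pow_char, Nat.div_div_eq_div_mul]
  split_ifs <;> first | rfl | omega

/-- Reduction modulo `3` of integral power series. -/
noncomputable abbrev mapThree : ℤ⟦X⟧ →+* (ZMod 3)⟦X⟧ := PowerSeries.map (Int.castRingHom (ZMod 3))

lemma hasResidue_phi_sub : HasResidue 1 (mapThree phi - mapThree phi ^ 9) := by
  intro n hn
  rw [map_sub, coeff_pow_nine] at hn
  split_ifs at hn with h
  · obtain ⟨k, rfl⟩ := h
    simp [coeff_phi_nine_mul] at hn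
  · rw [sub_zero] at hn
    obtain ⟨j, hj⟩ := exists_sq_eq_of_coeff_phi_ne_zero (coeff_ne_zero_of_map hn)
    have h3 : ∀ x : ZMod 3, x ≠ 0 → x ^ 2 = 1 := by decide
    have hj' := congrArg (Int.cast : ℤ → ZMod 3) hj
    push_cast at hj'
    rw [← hj']
    refine h3 j fun h0 => h ?_
    rw [ZMod.intCast_zmod_eq_zero_iff_dvd] at h0
    have := pow_dvd_pow_of_dvd h0 2
    rw [hj] at this
    exact_mod_cast this

lemma hasResidue_psiNeg_add : HasResidue 0 (mapThree psiNeg + X * mapThree psiNeg ^ 9) := by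
  intro n hn
  have h9 : ∀ x : ZMod 9, 2 * x ^ 2 + x = 1 ∨ ∃ y, 2 * x ^ 2 + x = 3 * y := by decide
  rcases n with - | n
  · simp
  rw [map_add, coeff_succ_X_mul, coeff_pow_nine] at hn
  split_ifs at hn with h
  · obtain ⟨k, rfl⟩ := h
    simp [coeff_psiNeg_nine_mul_add_one] at hn
  · rw [add_zero] at hn
    obtain ⟨j, hj⟩ := exists_of_coeff_psiNeg_ne_zero (coeff_ne_zero_of_map hn)
    have hj' := congrArg (Int.cast : ℤ → ZMod 9) hj
    push_cast at hj'
    rcases h9 j with h1 | ⟨y, hy⟩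
    · refine absurd ((ZMod.natCast_eq_zero_iff n 9).mp ?_) h
      linear_combination h1 - hj'
    · rw [hy] at hj'
      have := congrArg (ZMod.castHom (show 3 ∣ 9 by norm_num) (ZMod 3)) hj'
      simp only [map_mul, map_add, map_natCast, map_one, map_ofNat] at this
      push_cast
      rw [← this, show (3 : ZMod 3) = 0 from rfl, zero_mul]

lemma coeff_mapThree_mul_pow {u₁ u₂ : ℤˣ} {e₁ e₂ : ℤ → ℕ} (h₁ : ∀ j, j.natAbs ≤ e₁ j)
    (h₂ : ∀ j, j.natAbs ≤ e₂ j) (n : ℕ) :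
    coeff n (mapThree (thetaSeries u₁ e₁) * mapThree (thetaSeries u₂ e₂) ^ 3) =
      ∑ p ∈ Icc (-n : ℤ) n ×ˢ Icc (-n : ℤ) n,
        if e₁ p.1 + 3 * e₂ p.2 = n then (((u₁ ^ p.1 * u₂ ^ p.2 : ℤˣ) : ℤ) : ZMod 3) else 0 := by
  have key : ∀ x ∈ antidiagonal n,
      coeff x.1 (mapThree (thetaSeries u₁ e₁)) * coeff x.2 (mapThree (thetaSeries u₂ e₂) ^ 3) =
      ∑ p ∈ Icc (-n : ℤ) n ×ˢ Icc (-n : ℤ) n, if (e₁ p.1, 3 * e₂ p.2) = x then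
        (((u₁ ^ p.1 * u₂ ^ p.2 : ℤˣ) : ℤ) : ZMod 3) else 0 := by
    rintro ⟨k, l⟩ hx
    rw [HasAntidiagonal.mem_antidiagonal] at hx
    have hl : coeff l (mapThree (thetaSeries u₂ e₂) ^ 3) =
        ∑ j ∈ Icc (-n : ℤ) n, if 3 * e₂ j = l then (((u₂ ^ j : ℤˣ) : ℤ) : ZMod 3) else 0 := by
      rw [coeff_pow_char]
      split_ifs with h
      · obtain ⟨l, rfl⟩ := h
        rw [Nat.mul_div_cancel_left _ three_pos, coeff_map,
          coeff_thetaSeries h₂ (show l ≤ n by dsimp at hx; omega)]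
        simp [apply_ite (Int.cast : ℤ → ZMod 3)]
      · refine (sum_eq_zero fun j _ => if_neg fun hj => h ⟨_, hj.symm⟩).symm
    rw [hl, coeff_map, coeff_thetaSeries h₁ (show k ≤ n by dsimp at hx; omega), map_sum,
      sum_mul_sum, sum_product]
    refine sum_congr rfl fun i _ => sum_congr rfl fun j _ => ?_
    simp only [Prod.mk.injEq, ite_and]
    split_ifs <;> simp
  rw [coeff_mul, sum_congr rfl key, sum_comm]
  refine sum_congr rfl fun p _ => ?_
  rw [sum_ite_eq]
  simp only [HasAntidiagonal.mem_antidiagonal]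

/-- The pairs `(x, y)` in a large enough box with `x ^ 2 + 3 * y ^ 2 = n`. -/
noncomputable def phiPairs (n : ℕ) : Finset (ℤ × ℤ) :=
  {p ∈ Icc (-n : ℤ) n ×ˢ Icc (-n : ℤ) n | p.1 ^ 2 + 3 * p.2 ^ 2 = n}

/-- The pairs `(x, y)` in a large enough box with
`4 * x ^ 2 + 2 * x + 3 * (4 * y ^ 2 + 2 * y) = n`. -/
noncomputable def psiPairs (n : ℕ) : Finset (ℤ × ℤ) :=
  {p ∈ Icc (-n : ℤ) n ×ˢ Icc (-n : ℤ) n |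
    4 * p.1 ^ 2 + 2 * p.1 + 3 * (4 * p.2 ^ 2 + 2 * p.2) = n}

lemma mem_phiPairs {n : ℕ} {p : ℤ × ℤ} : p ∈ phiPairs n ↔ p.1 ^ 2 + 3 * p.2 ^ 2 = n := by
  simp only [phiPairs, mem_filter, mem_product, mem_Icc, and_iff_right_iff_imp]
  intro h
  have h1 := natAbs_le_phi_exponent p.1
  have h2 := natAbs_le_phi_exponent p.2
  have := sq_nonneg p.1
  have := sq_nonneg p.2
  omega

lemma mem_psiPairs {n : ℕ} {p : ℤ × ℤ} :
    p ∈ psiPairs n ↔ 4 * p.1 ^ 2 + 2 * p.1 + 3 * (4 * p.2 ^ 2 + 2 * p.2) = n := by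
  simp only [psiPairs, mem_filter, mem_product, mem_Icc, and_iff_right_iff_imp]
  intro h
  have h1 := natAbs_le_psiSq_exponent p.1
  have h2 := natAbs_le_psiSq_exponent p.2
  have := psiSq_exponent_nonneg p.1
  have := psiSq_exponent_nonneg p.2
  omega

lemma phiPairs_emod_two {n : ℕ} {p : ℤ × ℤ} (hp : p ∈ phiPairs n) : (p.1 + p.2) % 2 = n % 2 := by
  have h := mem_phiPairs.mp hp
  have h1 : (p.1 ^ 2) % 2 = p.1 % 2 := by
    rcases Int.emod_two_eq_zero_or_one p.1 with h | h <;> simp [pow_two, Int.mul_emod, h]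
  have h2 : (p.2 ^ 2) % 2 = p.2 % 2 := by
    rcases Int.emod_two_eq_zero_or_one p.2 with h | h <;> simp [pow_two, Int.mul_emod, h]
  omega

lemma coeff_phi_pow_four (n : ℕ) :
    coeff n (mapThree phi ^ 4) = (-1) ^ n * (#(phiPairs n) : ZMod 3) := by
  rw [show mapThree phi ^ 4 = mapThree phi * mapThree phi ^ 3 by ring]
  simp only [phi]
  rw [coeff_mapThree_mul_pow natAbs_le_phi_exponent natAbs_le_phi_exponent, ← sum_filter]
  have : ({p ∈ Icc (-n : ℤ) n ×ˢ Icc (-n : ℤ) n | (p.1 ^ 2).toNat + 3 * (p.2 ^ 2).toNat = n} :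
      Finset (ℤ × ℤ)) = phiPairs n := by
    refine filter_congr fun p _ => ?_
    have := sq_nonneg p.1
    have := sq_nonneg p.2
    omega
  rw [this, sum_congr rfl (g := fun _ => (-1 : ZMod 3) ^ n), sum_const, nsmul_eq_mul, mul_comm]
  intro p hp
  have h := phiPairs_emod_two hp
  rw [← zpow_add]
  obtain ⟨k, hk⟩ : ∃ k, p.1 + p.2 = n + 2 * k := ⟨(p.1 + p.2 - n) / 2, by omega⟩
  rw [hk, zpow_add, zpow_mul]
  simp

lemma coeff_psiSq_pow_four (n : ℕ) : coeff n (mapThree psiSq ^ 4) = (#(psiPairs n) : ZMod 3) := by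
  rw [show mapThree psiSq ^ 4 = mapThree psiSq * mapThree psiSq ^ 3 by ring]
  simp only [psiSq]
  rw [coeff_mapThree_mul_pow natAbs_le_psiSq_exponent natAbs_le_psiSq_exponent, ← sum_filter]
  have : ({p ∈ Icc (-n : ℤ) n ×ˢ Icc (-n : ℤ) n |
      (4 * p.1 ^ 2 + 2 * p.1).toNat + 3 * (4 * p.2 ^ 2 + 2 * p.2).toNat = n} :
      Finset (ℤ × ℤ)) = psiPairs n := by
    refine filter_congr fun p _ => ?_
    have := psiSq_exponent_nonneg p.1
    have := psiSq_exponent_nonneg p.2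
    omega
  rw [this]
  simp

lemma card_phiPairs_of_even {n : ℕ} (hn : Even n) (hn0 : n ≠ 0) : 3 ∣ #(phiPairs n) := by
  have hpar (p : phiPairs n) : (p.1.1 + p.1.2) % 2 = 0 := by
    rw [phiPairs_emod_two p.2]
    exact_mod_cast Nat.even_iff.mp hn
  let σ : Function.End (phiPairs n) := fun p =>
    ⟨((-p.1.1 - 3 * p.1.2) / 2, (p.1.1 - p.1.2) / 2), by
      obtain ⟨k, hk⟩ : ∃ k, p.1.1 = p.1.2 + 2 * k := ⟨(p.1.1 - p.1.2) / 2, by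
        have := hpar p
        omega⟩
      have h := mem_phiPairs.mp p.2
      rw [mem_phiPairs, ← h, show (-p.1.1 - 3 * p.1.2) / 2 = -k - 2 * p.1.2 by omega,
        show (p.1.1 - p.1.2) / 2 = k by omega, hk]
      ring⟩
  have hσ : σ ^ 3 ^ 1 = 1 := by
    funext p
    have := hpar p
    refine Subtype.ext (Prod.ext ?_ ?_)
    · change (-((-((-p.1.1 - 3 * p.1.2) / 2) - 3 * ((p.1.1 - p.1.2) / 2)) / 2) -
        3 * (((-p.1.1 - 3 * p.1.2) / 2 - (p.1.1 - p.1.2) / 2) / 2)) / 2 = p.1.1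
      omega
    · change ((-((-p.1.1 - 3 * p.1.2) / 2) - 3 * ((p.1.1 - p.1.2) / 2)) / 2 -
        ((-p.1.1 - 3 * p.1.2) / 2 - (p.1.1 - p.1.2) / 2) / 2) / 2 = p.1.2
      omega
  have h := Equiv.Perm.card_fixedPoints_modEq hσ
  have hempty : IsEmpty (Function.fixedPoints σ) := by
    refine ⟨fun ⟨p, hp⟩ => hn0 ?_⟩
    have h1 : (-p.1.1 - 3 * p.1.2) / 2 = p.1.1 := congrArg (fun q => q.1.1) hp
    have h2 : (p.1.1 - p.1.2) / 2 = p.1.2 := congrArg (fun q => q.1.2) hp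
    have := hpar p
    have h3 := mem_phiPairs.mp p.2
    rw [show p.1.1 = 0 by omega, show p.1.2 = 0 by omega] at h3
    exact_mod_cast h3.symm
  rw [← Fintype.card_coe]
  exact Nat.modEq_zero_iff_dvd.mp (h.trans (by rw [Fintype.card_eq_zero_iff.mpr hempty]))

lemma card_phiPairs_of_odd {n : ℕ} (hn : Even n) : #(phiPairs (n + 1)) = 2 * #(psiPairs n) := by
  have h2 : #{p ∈ phiPairs (n + 1) | (p.1 + p.2) % 4 = 1} = #(psiPairs n) := by
    refine card_nbij' (fun p => ((p.1 - 3 * p.2 - 1) / 4, (p.1 + p.2 - 1) / 4))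
      (fun p => (p.1 + 3 * p.2 + 1, p.2 - p.1)) ?_ ?_ ?_ ?_
    · intro p hp
      simp only [coe_filter, Set.mem_ofPred_eq, mem_phiPairs] at hp
      obtain ⟨h, h4⟩ := hp
      obtain ⟨j, hj⟩ : ∃ j, p.1 = 4 * j + 1 - p.2 := ⟨(p.1 + p.2 - 1) / 4, by omega⟩
      simp only [SetLike.mem_coe, mem_psiPairs]
      rw [show (p.1 - 3 * p.2 - 1) / 4 = j - p.2 by omega,
        show (p.1 + p.2 - 1) / 4 = j by omega]
      rw [hj] at h
      push_cast at h
      linear_combination h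
    · intro p hp
      simp only [SetLike.mem_coe, mem_psiPairs] at hp
      simp only [coe_filter, Set.mem_ofPred_eq, mem_phiPairs]
      refine ⟨?_, by omega⟩
      push_cast
      linear_combination hp
    · intro p hp
      simp only [coe_filter, Set.mem_ofPred_eq] at hp
      ext <;> dsimp <;> omega
    · intro p hp
      ext <;> dsimp <;> omega
  have h3 : #{p ∈ phiPairs (n + 1) | ¬(p.1 + p.2) % 4 = 1} =
      #{p ∈ phiPairs (n + 1) | (p.1 + p.2) % 4 = 1} := by
    refine card_nbij' (fun p => -p) (fun p => -p) ?_ ?_ (fun _ _ => neg_neg _)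
      (fun _ _ => neg_neg _)
    all_goals
      intro p hp
      simp only [coe_filter, Set.mem_ofPred_eq] at hp ⊢
      have hpar := phiPairs_emod_two hp.1
      have hn2 := Nat.even_iff.mp hn
      refine ⟨?_, ?_⟩
      · simpa [mem_phiPairs] using hp.1
      · simp only [Prod.fst_neg, Prod.snd_neg]
        push_cast at hpar
        omega
  rw [← card_filter_add_card_filter_not (s := phiPairs (n + 1)) (fun p => (p.1 + p.2) % 4 = 1),
    h3, h2, two_mul]

lemma phi_pow_four_eq : mapThree phi ^ 4 = 1 + X * mapThree psiSq ^ 4 := by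
  ext n
  rw [map_add, coeff_one]
  rcases n with - | n
  · rw [coeff_zero_X_mul, coeff_zero_eq_constantCoeff_apply, map_pow,
      ← coeff_zero_eq_constantCoeff_apply, coeff_map, coeff_zero_phi]
    simp
  rw [coeff_succ_X_mul, coeff_phi_pow_four, coeff_psiSq_pow_four, if_neg n.succ_ne_zero, zero_add]
  rcases Nat.even_or_odd n with hn | hn
  · rw [card_phiPairs_of_odd hn, hn.add_one.neg_one_pow]
    have h3 : (3 : ZMod 3) = 0 := rfl
    push_cast
    linear_combination -(#(psiPairs n) : ZMod 3) * h3
  · have h1 := (ZMod.natCast_eq_zero_iff _ 3).mpr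
      (card_phiPairs_of_even hn.add_one n.succ_ne_zero)
    have h2 : psiPairs n = ∅ := by
      refine eq_empty_of_forall_notMem fun p hp => ?_
      rw [mem_psiPairs] at hp
      obtain ⟨k, rfl⟩ := hn
      push_cast at hp
      omega
    rw [h1, h2]
    simp

theorem three_dvd_ped (m : ℕ) : 3 ∣ ped (9 * m + 7) := by
  set g := mapThree pedSeries with hg
  set F := mapThree phi with hF
  have hD : mapThree psiNeg = g * F := by rw [← pedSeries_mul_phi_and_psiNeg.1, map_mul]
  have hP : mapThree psiSq = g * (g * F) := by rw [← pedSeries_mul_phi_and_psiNeg.2, map_mul, hD]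
  have hF4 := phi_pow_four_eq
  have hb := hasResidue_phi_sub
  have hd := hasResidue_psiNeg_add
  rw [hP, ← hF] at hF4
  rw [hD] at hd
  rw [← hF] at hb
  have ha : HasResidue 0 (F ^ 9) := by
    rw [show F ^ 9 = (F ^ 3) ^ 3 by ring]
    exact hasResidue_pow_three _
  have hd1 : HasResidue 1 (-X * (g * F) ^ 9) := by
    rw [show -X * (g * F) ^ 9 = X * (-(g * F) ^ 3) ^ 3 by ring]
    exact hasResidue_X.mul (hasResidue_pow_three (-(g * F) ^ 3))
  obtain ⟨E, hE⟩ : ∃ E, F * E = 1 := by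
    refine IsUnit.exists_right_inv ?_
    rw [isUnit_iff_constantCoeff, hF, ← coeff_zero_eq_constantCoeff_apply, coeff_map,
      coeff_zero_phi]
    simp
  have hE3 := hasResidue_pow_three E
  have h3 : (3 : (ZMod 3)⟦X⟧) = 0 := by
    rw [show (3 : (ZMod 3)⟦X⟧) = C 3 from (map_ofNat C 3).symm,
      show (3 : ZMod 3) = 0 from rfl, map_zero]
  set d := g * F + X * (g * F) ^ 9
  set d₁ := -X * (g * F) ^ 9
  set a := F ^ 9
  set b := F - F ^ 9
  have key : g * F ^ 3 = X * F ^ 15 * g ^ 9 + (d * (a * a) + d₁ * (b * b)) +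
      (d * (b * b) + (d₁ * a * b + d₁ * a * b)) := by
    simp only [d, d₁, a, b]
    linear_combination (g * F ^ 5 * F ^ 9 * (F - F ^ 9) + g * F ^ 23 + g * F ^ 11) * hF4 +
      (g * F + X * g ^ 9 * F ^ 9) * F ^ 9 * (F - F ^ 9) * h3
  have key' : g = X * (F ^ 3 * (g * F) ^ 9) + (d * (a * a) + d₁ * (b * b)) * E ^ 3 +
      (d * (b * b) + (d₁ * a * b + d₁ * a * b)) * E ^ 3 := by
    have hE3 : F ^ 3 * E ^ 3 = 1 := by rw [← mul_pow, hE, one_pow]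
    linear_combination E ^ 3 * key - (g - X * F ^ 12 * g ^ 9) * hE3
  have h0 : HasResidue 0 ((d * (a * a) + d₁ * (b * b)) * E ^ 3) :=
    HasResidue.mul (r := 0) (HasResidue.add (hd.mul (ha.mul ha)) (hd1.mul (hb.mul hb))) hE3
  have h2 : HasResidue 2 ((d * (b * b) + (d₁ * a * b + d₁ * a * b)) * E ^ 3) :=
    HasResidue.mul (r := 2) (s := 0) (HasResidue.add (hd.mul (hb.mul hb)) (HasResidue.add
      ((hd1.mul ha).mul hb) ((hd1.mul ha).mul hb))) hE3
  have hN : ((9 * m + 7 : ℕ) : ZMod 3) = 1 := by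
    push_cast
    rw [show (9 : ZMod 3) = 0 from rfl, zero_mul]
    rfl
  have h1 : coeff (9 * m + 6) (F ^ 3 * (g * F) ^ 9) = 0 := by
    refine coeff_mul_eq_zero_of fun k l hkl hk hl => ?_
    rw [coeff_pow_nine] at hl
    rw [coeff_pow_char] at hk
    split_ifs at hl hk with h9 h3
    · obtain ⟨k, rfl⟩ := h3
      rw [Nat.mul_div_cancel_left _ three_pos] at hk
      obtain ⟨j, hj⟩ := exists_sq_eq_of_coeff_phi_ne_zero (coeff_ne_zero_of_map hk)
      have hsq : ∀ x : ZMod 3, x ^ 2 ≠ 2 := by decide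
      refine hsq j ?_
      have hj := congrArg (Int.cast : ℤ → ZMod 3) hj
      push_cast at hj
      rw [hj]
      refine (ZMod.natCast_eq_natCast_iff k 2 3).mpr ?_
      rw [Nat.ModEq]
      omega
    all_goals exact absurd rfl ‹_›
  have h := congrArg (coeff (9 * m + 7)) key'
  rw [map_add, map_add, h0.coeff_eq_zero (by rw [hN]; decide),
    h2.coeff_eq_zero (by rw [hN]; decide), coeff_succ_X_mul, h1, hg, coeff_map, pedSeries,
    coeff_mk] at h
  simpa [ZMod.natCast_eq_zero_iff] using h

theorem ped_225n_add_223 (n : ℕ) : ped (225 * n + 223) ≡ 0 [MOD 24] := by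
  have h8 := eight_dvd_ped n
  have h3 := three_dvd_ped (25 * n + 24)
  rw [show 9 * (25 * n + 24) + 7 = 225 * n + 223 by ring] at h3
  rw [Nat.modEq_zero_iff_dvd]
  omega
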